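/- Assume (μ,σ,f) satisfies (k-MLLC) for some k ∈ ℕ with k ≥ 3. Then the partial derivative φ⁽ᵏ⁾_{z⁽ᵏ⁻¹⁾} can be expressed as a function of θ_{k−} only: there exists a function g on Θ_{k−1} × ℝ^{m×_k n}, with values in the linear maps from ℝ^{(m×d)×_{k−1} n} to ℝ^{m×_k n}, such that for every θ_k = (t,x,y⁽⁰⁾,z⁽⁰⁾,…,y⁽ᵏ⁾,z⁽ᵏ⁾) ∈ Θ_k the derivative of φ⁽ᵏ⁾ with respect to z⁽ᵏ⁻¹⁾ at θ_k equals g(θ_{k−}), where θ_{k−} := (θ_{k−1}, y⁽ᵏ⁾), i.e. this derivative does not depend on z⁽ᵏ⁾. If L_{σ,z} = 0, the same conclusion already holds for k = 2. -/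

import Mathlib

namespace DecouplingFBSDE

/-! ### Generalized matrices

`Tens n m k` is the space `ℝ^{m×_k n}` of real valued maps on `[m]×[n]^k`;
`TensZ n m d k` is the space `ℝ^{(m×d)×_k n}` of real valued maps on `[m]×[d]×[n]^k`. -/

/-- `ℝ^{m×_k n}`. -/
abbrev Tens (n m k : ℕ) : Type := Fin m → (Fin k → Fin n) → ℝ

/-- `ℝ^{(m×d)×_k n}`. -/
abbrev TensZ (n m d k : ℕ) : Type := Fin m → Fin d → (Fin k → Fin n) → ℝ

/-- `ℝ^{n×d}`, the space of values of `σ`. -/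
abbrev Sig (n d : ℕ) : Type := Fin n → Fin d → ℝ

/-- The space of the variables `(x, y⁽⁰⁾, z⁽⁰⁾)` (identifying `ℝᵐ` with `Tens n m 0`
and `ℝ^{m×d}` with `TensZ n m d 0`). -/
abbrev Arg (n m d : ℕ) : Type := (Fin n → ℝ) × Tens n m 0 × TensZ n m d 0

variable {n m d : ℕ}

/-- Frobenius norm on `Tens n m k`. -/
noncomputable def frobT {k : ℕ} (y : Tens n m k) : ℝ :=
  Real.sqrt (∑ a, ∑ c, (y a c) ^ 2)

/-- Frobenius norm on `TensZ n m d k`. -/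
noncomputable def frobTZ {k : ℕ} (z : TensZ n m d k) : ℝ :=
  Real.sqrt (∑ a, ∑ b, ∑ c, (z a b c) ^ 2)

/-- Frobenius norm on `ℝ^{n×d}`. -/
noncomputable def frobS (s : Sig n d) : ℝ :=
  Real.sqrt (∑ i, ∑ j, (s i j) ^ 2)

/-- `y⁽¹⁾ ∈ ℝ^{m×_1 n}` as an ordinary `m×n` matrix. -/
def mat1 (v : Tens n m 1) : Matrix (Fin m) (Fin n) ℝ :=
  Matrix.of fun a i => v a (fun _ => i)

/-- Operator norm of `y⁽¹⁾ ∈ ℝ^{m×n}` with respect to the Euclidean norms. -/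
noncomputable def opN (v : Tens n m 1) : ℝ :=
  ‖LinearMap.toContinuousLinearMap (Matrix.toEuclideanLin (mat1 v))‖

/-- Standard basis vector of `ℝⁿ`. -/
def eX (c : Fin n) : Fin n → ℝ := Pi.single c 1

/-- Standard basis vector of `ℝᵐ ≅ Tens n m 0`. -/
def eY (a : Fin m) : Tens n m 0 := fun a' _ => if a' = a then 1 else 0

/-- Standard basis element of `ℝ^{m×d} ≅ TensZ n m d 0`. -/
def eZ (a : Fin m) (b : Fin d) : TensZ n m d 0 :=
  fun a' b' _ => if a' = a ∧ b' = b then 1 else 0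

/-- `σ_x(θ)` applied to a direction `v ∈ ℝⁿ`. -/
noncomputable def sx (σ : ℝ → Arg n m d → Sig n d) (t : ℝ) (p : Arg n m d)
    (v : Fin n → ℝ) : Sig n d := fderiv ℝ (σ t) p (v, 0, 0)

/-- `σ_y(θ)` applied to a direction `w ∈ ℝᵐ`. -/
noncomputable def sy (σ : ℝ → Arg n m d → Sig n d) (t : ℝ) (p : Arg n m d)
    (w : Tens n m 0) : Sig n d := fderiv ℝ (σ t) p (0, w, 0)

/-- `σ_z(θ)` applied to a direction `ζ ∈ ℝ^{m×d}`. -/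
noncomputable def sz (σ : ℝ → Arg n m d → Sig n d) (t : ℝ) (p : Arg n m d)
    (ζ : TensZ n m d 0) : Sig n d := fderiv ℝ (σ t) p (0, 0, ζ)

/-- `μ_x(θ)` applied to a direction `v ∈ ℝⁿ`. -/
noncomputable def mx (μ : ℝ → Arg n m d → (Fin n → ℝ)) (t : ℝ) (p : Arg n m d)
    (v : Fin n → ℝ) : Fin n → ℝ := fderiv ℝ (μ t) p (v, 0, 0)

/-- `μ_y(θ)` applied to a direction `w ∈ ℝᵐ`. -/
noncomputable def my (μ : ℝ → Arg n m d → (Fin n → ℝ)) (t : ℝ) (p : Arg n m d)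
    (w : Tens n m 0) : Fin n → ℝ := fderiv ℝ (μ t) p (0, w, 0)

/-- `μ_z(θ)` applied to a direction `ζ ∈ ℝ^{m×d}`. -/
noncomputable def mz (μ : ℝ → Arg n m d → (Fin n → ℝ)) (t : ℝ) (p : Arg n m d)
    (ζ : TensZ n m d 0) : Fin n → ℝ := fderiv ℝ (μ t) p (0, 0, ζ)

/-- The generalized matrix `Id_{m×d} − y⁽¹⁾σ_z(θ) ∈ ℝ^{(m×d)×(m×d)}`, viewed as an
`(m·d)×(m·d)` matrix. -/
noncomputable def Gmat (σ : ℝ → Arg n m d → Sig n d) (t : ℝ) (p : Arg n m d)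
    (y1 : Tens n m 1) : Matrix (Fin m × Fin d) (Fin m × Fin d) ℝ :=
  1 - Matrix.of fun ab pq => ∑ i, mat1 y1 ab.1 i * sz σ t p (eZ pq.1 pq.2) i ab.2

/-- `y⁽¹⁾σ_x(θ) + y⁽¹⁾σ_y(θ)y⁽¹⁾ + z⁽¹⁾ ∈ ℝ^{(m×d)×n}`. -/
noncomputable def Rh (σ : ℝ → Arg n m d → Sig n d) (t : ℝ) (p : Arg n m d)
    (y1 : Tens n m 1) (z1 : TensZ n m d 1) : TensZ n m d 1 :=
  fun a b c =>
    (∑ i, mat1 y1 a i * sx σ t p (eX (c 0)) i b)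
    + (∑ j, (∑ i, mat1 y1 a i * sy σ t p (eY j) i b) * mat1 y1 j (c 0))
    + z1 a b c

/-- `h⁽¹⁾(θ₁) := (Id_{m×d} − y⁽¹⁾σ_z(θ))⁻¹ (y⁽¹⁾σ_x(θ) + y⁽¹⁾σ_y(θ)y⁽¹⁾ + z⁽¹⁾)`. -/
noncomputable def h1 (σ : ℝ → Arg n m d → Sig n d) (t : ℝ) (p : Arg n m d)
    (y1 : Tens n m 1) (z1 : TensZ n m d 1) : TensZ n m d 1 :=
  fun a b c =>
    ∑ pq : Fin m × Fin d, (Gmat σ t p y1)⁻¹ (a, b) pq * Rh σ t p y1 z1 pq.1 pq.2 c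

/-- The `n×n` matrix `σ⁽ᵇ⁾_x(θ) + σ⁽ᵇ⁾_y(θ)y⁽¹⁾ + σ⁽ᵇ⁾_z(θ)h⁽¹⁾(θ₁)` for the `b`-th
column of `σ`. -/
noncomputable def Bmat (σ : ℝ → Arg n m d → Sig n d) (t : ℝ) (p : Arg n m d)
    (y1 : Tens n m 1) (z1 : TensZ n m d 1) (b : Fin d) : Fin n → Fin n → ℝ :=
  fun i c =>
    sx σ t p (eX c) i b
    + (∑ a, sy σ t p (eY a) i b * mat1 y1 a c)
    + ∑ pq : Fin m × Fin d,
        sz σ t p (eZ pq.1 pq.2) i b * h1 σ t p y1 z1 pq.1 pq.2 (fun _ => c)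

/-- The `n×n` matrix `μ_x(θ) + μ_y(θ)y⁽¹⁾ + μ_z(θ)h⁽¹⁾(θ₁)`. -/
noncomputable def Amat (μ : ℝ → Arg n m d → (Fin n → ℝ)) (σ : ℝ → Arg n m d → Sig n d)
    (t : ℝ) (p : Arg n m d) (y1 : Tens n m 1) (z1 : TensZ n m d 1) :
    Fin n → Fin n → ℝ :=
  fun i c =>
    mx μ t p (eX c) i
    + (∑ a, my μ t p (eY a) i * mat1 y1 a c)
    + ∑ pq : Fin m × Fin d,
        mz μ t p (eZ pq.1 pq.2) i * h1 σ t p y1 z1 pq.1 pq.2 (fun _ => c)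

/-- Product of a generalized matrix `y ∈ ℝ^{m×_{k+1} n}` with an `n×n` matrix `A`,
contracting the trailing index of `y` with the first index of `A`. -/
def mulRight {k : ℕ} (y : Tens n m (k + 1)) (A : Fin n → Fin n → ℝ) :
    Tens n m (k + 1) :=
  fun a c => ∑ j, y a (Fin.snoc (Fin.init c) j) * A j (c (Fin.last k))

/-- `h⁽ᵏ⁾(θ_k)` for `k ≥ 2`:
`h⁽ᵏ'ʲ⁾(θ_k) = z⁽ᵏ'ʲ⁾ + y⁽ᵏ⁾(σ⁽ʲ⁾_x(θ) + σ⁽ʲ⁾_y(θ)y⁽¹⁾ + σ⁽ʲ⁾_z(θ)h⁽¹⁾(θ₁))`. -/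
noncomputable def hK (σ : ℝ → Arg n m d → Sig n d) (t : ℝ) (p : Arg n m d)
    (y1 : Tens n m 1) (z1 : TensZ n m d 1) {k : ℕ}
    (yk : Tens n m (k + 1)) (zk : TensZ n m d (k + 1)) : TensZ n m d (k + 1) :=
  fun a b c => zk a b c + mulRight yk (Bmat σ t p y1 z1 b) a c

/-- `h⁽ᵏ⁾` for every `k ≥ 1`: `h⁽¹⁾` for `k = 1` and the affine formula for `k ≥ 2`. -/
noncomputable def hGen (σ : ℝ → Arg n m d → Sig n d) (t : ℝ) (p : Arg n m d)
    (y1 : Tens n m 1) (z1 : TensZ n m d 1) :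
    {k : ℕ} → Tens n m (k + 1) → TensZ n m d (k + 1) → TensZ n m d (k + 1)
  | 0, yk, zk => h1 σ t p yk zk
  | _ + 1, yk, zk => hK σ t p y1 z1 yk zk

/-- The state space `(x, y⁽⁰⁾, z⁽⁰⁾, …, y⁽ⁱ⁾, z⁽ⁱ⁾)` of the spatial variables
of `Θ_i`. -/
abbrev EE (n m d i : ℕ) : Type :=
  (Fin n → ℝ) × ((j : Fin (i + 1)) → Tens n m j) × ((j : Fin (i + 1)) → TensZ n m d j)

/-- `φ_x(θ) ∈ ℝ^{m×_i n×n}`, reassembled as an element of `ℝ^{m×_{i+1} n}` (the trailing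
index runs through the `x`-directions). -/
def appX {i : ℕ} (L : (Fin n → ℝ) → Tens n m i) : Tens n m (i + 1) :=
  fun a c => L (eX (c (Fin.last i))) a (Fin.init c)

/-- Product `φ_{y⁽ʲ⁾}(θ)·y`, applying the linear map `L` slice-wise in the trailing
index of `y ∈ ℝ^{m×_{j+1} n}`. -/
def appY {j i : ℕ} (L : Tens n m j → Tens n m i) (y : Tens n m (j + 1)) :
    Tens n m (i + 1) :=
  fun a c => L (fun a' c' => y a' (Fin.snoc c' (c (Fin.last i)))) a (Fin.init c)

/-- Product `φ_{z⁽ʲ⁾}(θ)·z`, applying the linear map `L` slice-wise in the trailing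
index of `z ∈ ℝ^{(m×d)×_{j+1} n}`. -/
def appZ {j i : ℕ} (L : TensZ n m d j → Tens n m i) (z : TensZ n m d (j + 1)) :
    Tens n m (i + 1) :=
  fun a c => L (fun a' b' c' => z a' b' (Fin.snoc c' (c (Fin.last i)))) a (Fin.init c)

/-- Partial derivative in the direction of `x`, extracted from a total derivative. -/
noncomputable def Dx {i : ℕ} (D : EE n m d i →L[ℝ] Tens n m i) :
    (Fin n → ℝ) → Tens n m i :=
  fun v => D (v, 0, 0)

/-- Partial derivative in the direction of `y⁽ʲ⁾`, extracted from a total derivative. -/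
noncomputable def Dyp {i : ℕ} (D : EE n m d i →L[ℝ] Tens n m i) (j : Fin (i + 1)) :
    Tens n m j → Tens n m i :=
  fun w => D (0, Pi.single j w, 0)

/-- Partial derivative in the direction of `z⁽ʲ⁾`, extracted from a total derivative. -/
noncomputable def Dzp {i : ℕ} (D : EE n m d i →L[ℝ] Tens n m i) (j : Fin (i + 1)) :
    TensZ n m d j → Tens n m i :=
  fun w => D (0, 0, Pi.single j w)

/-- The type of the function `φ⁽ⁱ⁾`. -/
abbrev PhiFun (n m d i : ℕ) : Type := ℝ → EE n m d i → Tens n m i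

/-- The right hand side of the recursion defining `φ⁽ⁱ⁺¹⁾` from the derivative `D`
of `φ⁽ⁱ⁾`:
`φ⁽ⁱ⁺¹⁾ = φ⁽ⁱ⁾_x + Σ_j (φ⁽ⁱ⁾_{y⁽ʲ⁾}y⁽ʲ⁺¹⁾ + φ⁽ⁱ⁾_{z⁽ʲ⁾}h⁽ʲ⁺¹⁾)
         − y⁽ⁱ⁺¹⁾(μ_x + μ_y y⁽¹⁾ + μ_z h⁽¹⁾) − Σ_b z⁽ⁱ⁺¹'ᵇ⁾(σ⁽ᵇ⁾_x + σ⁽ᵇ⁾_y y⁽¹⁾ + σ⁽ᵇ⁾_z h⁽¹⁾)`. -/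
noncomputable def phiStep {i : ℕ} (μ : ℝ → Arg n m d → (Fin n → ℝ))
    (σ : ℝ → Arg n m d → Sig n d) (t : ℝ) (D : EE n m d i →L[ℝ] Tens n m i)
    (x : Fin n → ℝ) (Y : (j : Fin (i + 2)) → Tens n m j)
    (Z : (j : Fin (i + 2)) → TensZ n m d j) : Tens n m (i + 1) :=
  (appX (Dx D)
      + ∑ j : Fin (i + 1),
          (appY (Dyp D j) (Y j.succ)
            + appZ (Dzp D j)
                (hGen σ t (x, Y ⟨0, by omega⟩, Z ⟨0, by omega⟩)
                  (Y ⟨1, by omega⟩) (Z ⟨1, by omega⟩) (Y j.succ) (Z j.succ))))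
    - mulRight (Y (Fin.last (i + 1)))
        (Amat μ σ t (x, Y ⟨0, by omega⟩, Z ⟨0, by omega⟩)
          (Y ⟨1, by omega⟩) (Z ⟨1, by omega⟩))
    - ∑ b : Fin d,
        mulRight (fun a c => Z (Fin.last (i + 1)) a b c)
          (Bmat σ t (x, Y ⟨0, by omega⟩, Z ⟨0, by omega⟩)
            (Y ⟨1, by omega⟩) (Z ⟨1, by omega⟩) b)

/-- The family `(φ⁽⁰⁾, …, φ⁽ᵏ⁾)` satisfies the defining recursion of the generators
of the backward equations for the spatial derivatives of the decoupling field: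
`φ⁽⁰⁾ = f` and, at every point of `Θ_{i+1}`, `φ⁽ⁱ⁾` is (classically) differentiable
in `(x, y⁽⁰⁾, z⁽⁰⁾, …, y⁽ⁱ⁾, z⁽ⁱ⁾)` and `φ⁽ⁱ⁺¹⁾` is given by the recursion formula. -/
structure IsPhiChain (n m d k : ℕ) (T Lz : ℝ)
    (μ : ℝ → Arg n m d → (Fin n → ℝ)) (σ : ℝ → Arg n m d → Sig n d)
    (f : ℝ → Arg n m d → Tens n m 0)
    (φ : (i : ℕ) → PhiFun n m d i) : Prop where
  base : ∀ t ∈ Set.Icc (0:ℝ) T, ∀ p : EE n m d 0,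
    φ 0 t p = f t (p.1, p.2.1 ⟨0, by omega⟩, p.2.2 ⟨0, by omega⟩)
  step : ∀ i : ℕ, i + 1 ≤ k → ∀ t ∈ Set.Icc (0:ℝ) T,
    ∀ (x : Fin n → ℝ) (Y : (j : Fin (i + 2)) → Tens n m j)
      (Z : (j : Fin (i + 2)) → TensZ n m d j),
      Lz * opN (Y ⟨1, by omega⟩) < 1 →
      ∃ D : EE n m d i →L[ℝ] Tens n m i,
        HasFDerivAt (φ i t) D (x, fun j => Y j.castSucc, fun j => Z j.castSucc) ∧
        φ (i + 1) t (x, Y, Z) = phiStep μ σ t D x Y Z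

/-- The modified local Lipschitz conditions `(k-MLLC)` for `(μ,σ,f)`:
`μ, σ, f` are deterministic, `k` times classically differentiable in `(x,y,z)`,
they and their derivatives up to order `k` are Lipschitz continuous in `(x,y,z)`
on sets with bounded `z`-component (uniformly in `t ∈ [0,T]`),
`‖μ(·,0,0,0)‖_∞, ‖f(·,0,0,0)‖_∞, ‖σ(·,·,·,0)‖_∞ < ∞`, and `σ` is Lipschitz
continuous in `z` with constant `Lz` with respect to Frobenius norms. -/
structure MLLC (n m d k : ℕ) (T : ℝ)
    (μ : ℝ → Arg n m d → (Fin n → ℝ)) (σ : ℝ → Arg n m d → Sig n d)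
    (f : ℝ → Arg n m d → Tens n m 0) (Lz : ℝ) : Prop where
  smooth_mu : ∀ t ∈ Set.Icc (0:ℝ) T, ContDiff ℝ (k : ℕ∞) (μ t)
  smooth_sigma : ∀ t ∈ Set.Icc (0:ℝ) T, ContDiff ℝ (k : ℕ∞) (σ t)
  smooth_f : ∀ t ∈ Set.Icc (0:ℝ) T, ContDiff ℝ (k : ℕ∞) (f t)
  lipschitz_on_bounded : ∀ R : ℝ, ∃ L : NNReal, ∀ t ∈ Set.Icc (0:ℝ) T, ∀ j : ℕ, j ≤ k →
    LipschitzOnWith L (iteratedFDeriv ℝ j (μ t)) {p : Arg n m d | frobTZ p.2.2 ≤ R} ∧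
    LipschitzOnWith L (iteratedFDeriv ℝ j (σ t)) {p : Arg n m d | frobTZ p.2.2 ≤ R} ∧
    LipschitzOnWith L (iteratedFDeriv ℝ j (f t)) {p : Arg n m d | frobTZ p.2.2 ≤ R}
  bounded_at_zero : ∃ C : ℝ, ∀ t ∈ Set.Icc (0:ℝ) T,
    ‖μ t 0‖ ≤ C ∧ ‖f t 0‖ ≤ C ∧ ∀ (x : Fin n → ℝ) (y : Tens n m 0), ‖σ t (x, y, 0)‖ ≤ C
  lz_nonneg : 0 ≤ Lz
  lz_lipschitz : ∀ t ∈ Set.Icc (0:ℝ) T, ∀ (x : Fin n → ℝ) (y : Tens n m 0)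
    (z z' : TensZ n m d 0),
    frobS (σ t (x, y, z) - σ t (x, y, z')) ≤ Lz * frobTZ (z - z')

/-!
The function `φ⁽ᵏ⁻¹⁾` is affine in `z⁽ᵏ⁻¹⁾`: each `h⁽ʲ⁾` is affine in it, and the `σ`-factor that
multiplies `z⁽ᵏ⁻¹⁾` does not contain it, because `k - 1 ≥ 2` or `σ_z = 0`. Hence the total
derivative of `φ⁽ᵏ⁻¹⁾` is again affine in `z⁽ᵏ⁻¹⁾`, and `φ⁽ᵏ⁻¹⁾_{z⁽ᵏ⁻¹⁾}` does not contain
`z⁽ᵏ⁻¹⁾`. In `φ⁽ᵏ⁾` the variable `z⁽ᵏ⁾` occurs only in `φ⁽ᵏ⁻¹⁾_{z⁽ᵏ⁻¹⁾} z⁽ᵏ⁾` and in its product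
with the `σ`-factor. Both are free of `z⁽ᵏ⁻¹⁾` and drop out of the derivative with respect to
`z⁽ᵏ⁻¹⁾`.
-/

/-- Being (the underlying function of) an affine map between real vector spaces. -/
def IsAffine {V W : Type*} [AddCommGroup V] [Module ℝ V] [AddCommGroup W] [Module ℝ W]
    (F : V → W) : Prop :=
  ∃ A : V →ᵃ[ℝ] W, ⇑A = F

namespace IsAffine

section Algebra

variable {V W U : Type*} [AddCommGroup V] [Module ℝ V] [AddCommGroup W] [Module ℝ W]
  [AddCommGroup U] [Module ℝ U] {F G : V → W}

lemma const (c : W) : IsAffine fun _ : V => c := ⟨AffineMap.const ℝ V c, rfl⟩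

lemma linearMap_comp (L : W →ₗ[ℝ] U) (hF : IsAffine F) : IsAffine fun v => L (F v) := by
  obtain ⟨A, rfl⟩ := hF
  exact ⟨L.toAffineMap.comp A, rfl⟩

lemma add (hF : IsAffine F) (hG : IsAffine G) : IsAffine fun v => F v + G v := by
  obtain ⟨⟨A, rfl⟩, ⟨B, rfl⟩⟩ := And.intro hF hG
  exact ⟨A + B, rfl⟩

lemma sub (hF : IsAffine F) (hG : IsAffine G) : IsAffine fun v => F v - G v := by
  obtain ⟨⟨A, rfl⟩, ⟨B, rfl⟩⟩ := And.intro hF hG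
  exact ⟨A - B, rfl⟩

lemma sum {ι : Type*} (s : Finset ι) {F : ι → V → W} (hF : ∀ i, IsAffine (F i)) :
    IsAffine fun v => ∑ i ∈ s, F i v := by
  classical
  induction s using Finset.induction_on with
  | empty => simpa using const (0 : W)
  | insert i s hi ih => simpa only [Finset.sum_insert hi] using (hF i).add ih

lemma const_mul {F : V → ℝ} (c : ℝ) (hF : IsAffine F) : IsAffine fun v => c * F v :=
  hF.linearMap_comp (LinearMap.mulLeft ℝ c)

lemma mul_const {F : V → ℝ} (hF : IsAffine F) (c : ℝ) : IsAffine fun v => F v * c :=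
  hF.linearMap_comp (LinearMap.mulRight ℝ c)

variable {ι : Type*} {E : ι → Type*} [∀ i, AddCommGroup (E i)] [∀ i, Module ℝ (E i)]
  {H : V → (i : ι) → E i}

lemma pi (hH : ∀ i, IsAffine fun v => H v i) : IsAffine H := by
  choose A hA using hH
  exact ⟨AffineMap.pi A, funext fun v => funext fun i => congrFun (hA i) v⟩

lemma apply (hH : IsAffine H) (i : ι) : IsAffine fun v => H v i :=
  hH.linearMap_comp (LinearMap.proj i)

lemma of_lineMap
    (hF : ∀ (a b : V) (s : ℝ), F (AffineMap.lineMap a b s) = AffineMap.lineMap (F a) (F b) s) :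
    IsAffine F := by
  simp only [AffineMap.lineMap_apply_module] at hF
  have map_smul (c : ℝ) (v : V) : F (c • v) = (1 - c) • F 0 + c • F v := by
    simpa using hF 0 v c
  have map_add (a b : V) : F (a + b) = F a + F b - F 0 := by
    have hmid : a + b = (1 - 1 / 2 : ℝ) • (2 : ℝ) • a + (1 / 2 : ℝ) • (2 : ℝ) • b := by module
    rw [hmid, hF, map_smul 2 a, map_smul 2 b]
    module
  let L : V →ₗ[ℝ] W :=
    { toFun := fun v => F v - F 0
      map_add' := fun a b => by rw [map_add]; abel
      map_smul' := fun c v => by rw [map_smul, RingHom.id_apply]; module }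
  exact ⟨AffineMap.mk' F L 0 fun v => by simp [L], rfl⟩

end Algebra

section Calculus

open scoped Topology

variable {V W E : Type*} [NormedAddCommGroup V] [NormedSpace ℝ V]
  [NormedAddCommGroup W] [NormedSpace ℝ W] [NormedAddCommGroup E] [NormedSpace ℝ E]

lemma differentiable [FiniteDimensional ℝ V] {F : V → W} (hF : IsAffine F) :
    Differentiable ℝ F := by
  obtain ⟨A, rfl⟩ := hF
  exact (⟨A, A.continuous_of_finiteDimensional⟩ : V →ᴬ[ℝ] W).differentiable

lemma fderiv_apply [FiniteDimensional ℝ V] {F : V → W} (hF : IsAffine F) (w v : V) :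
    fderiv ℝ F w v = F v - F 0 := by
  obtain ⟨A, rfl⟩ := hF
  have hA := (⟨A, A.continuous_of_finiteDimensional⟩ : V →ᴬ[ℝ] W).hasFDerivAt (x := w)
  rw [show fderiv ℝ A w = _ from hA.fderiv]
  simpa using A.linearMap_vsub v 0

-- The derivative of an affine combination is the affine combination of the derivatives.
lemma fderiv_translate {f : E → W} {J : V → E} {p : E}
    (haff : ∀ᶠ q in 𝓝 p, IsAffine fun w => f (q + J w))
    (hdiff : ∀ w, DifferentiableAt ℝ f (p + J w)) :
    IsAffine fun w => fderiv ℝ f (p + J w) := by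
  refine of_lineMap fun a b s => ?_
  have hd (w : V) : DifferentiableAt ℝ (fun q => f (q + J w)) p :=
    (differentiableAt_comp_add_right _).2 (hdiff w)
  have hcombo : (fun q => f (q + J (AffineMap.lineMap a b s))) =ᶠ[𝓝 p]
      (1 - s) • (fun q => f (q + J a)) + s • fun q => f (q + J b) := by
    filter_upwards [haff] with q ⟨A, hA⟩
    have := A.apply_lineMap a b s
    simpa [hA, AffineMap.lineMap_apply_module] using this
  simp only [← fderiv_comp_add_right]
  rw [hcombo.fderiv_eq, fderiv_add ((hd a).const_smul _) ((hd b).const_smul _),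
    fderiv_const_smul (hd a), fderiv_const_smul (hd b), AffineMap.lineMap_apply_module]

end Calculus

end IsAffine

/-- The inclusion of the `z⁽ʲ⁾`-coordinate axis into the spatial state space of `Θ_i`. -/
noncomputable def zIncl {i : ℕ} (j : Fin (i + 1)) : TensZ n m d j →L[ℝ] EE n m d i :=
  .inr ℝ _ _ ∘L .inr ℝ _ _ ∘L .single ℝ (fun j : Fin (i + 1) => TensZ n m d j) j

/-- The slice `z(·, ·, …, e)` of a generalized matrix at the value `e` of its trailing index. -/
def trailingSlice {k : ℕ} (e : Fin n) : TensZ n m d (k + 1) →L[ℝ] TensZ n m d k where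
  toFun z a b c := z a b (Fin.snoc c e)
  map_add' _ _ := rfl
  map_smul' _ _ := rfl

lemma appZ_Dzp_apply {i : ℕ} (D : EE n m d i →L[ℝ] Tens n m i) (j : Fin (i + 1))
    (z : TensZ n m d (j + 1)) (a : Fin m) (c : Fin (i + 1) → Fin n) :
    appZ (Dzp D j) z a c = D (zIncl j (trailingSlice (c (Fin.last i)) z)) a (Fin.init c) :=
  rfl

lemma appZ_Dzp_add {i : ℕ} (D : EE n m d i →L[ℝ] Tens n m i) (j : Fin (i + 1))
    (z z' : TensZ n m d (j + 1)) :
    appZ (Dzp D j) (z + z') = appZ (Dzp D j) z + appZ (Dzp D j) z' := by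
  ext a c
  simp only [Pi.add_apply, appZ_Dzp_apply, map_add]

lemma mulRight_add {k : ℕ} (y y' : Tens n m (k + 1)) (A : Fin n → Fin n → ℝ) :
    mulRight (y + y') A = mulRight y A + mulRight y' A := by
  ext a c
  simp only [mulRight, Pi.add_apply, add_mul, Finset.sum_add_distrib]

lemma hGen_succ_add (σ : ℝ → Arg n m d → Sig n d) (t : ℝ) (p : Arg n m d) (y1 : Tens n m 1)
    (z1 : TensZ n m d 1) {k : ℕ} (y : Tens n m (k + 2)) (z z' : TensZ n m d (k + 2)) :
    hGen σ t p y1 z1 y (z + z') = hGen σ t p y1 z1 y z + z' := by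
  ext a b c
  simp only [hGen, hK, Pi.add_apply]
  ring

section Affine

variable {V : Type*} [AddCommGroup V] [Module ℝ V] {σ : ℝ → Arg n m d → Sig n d} {t : ℝ}

lemma isAffine_h1 (p : Arg n m d) (y1 : Tens n m 1) {z : V → TensZ n m d 1} (hz : IsAffine z) :
    IsAffine fun w => h1 σ t p y1 (z w) :=
  .pi fun _ => .pi fun _ => .pi fun c => .sum _ fun pq =>
    .const_mul _ <| .add (.const _) <| ((hz.apply pq.1).apply pq.2).apply c

lemma isAffine_Bmat (p : Arg n m d) (y1 : Tens n m 1) {z : V → TensZ n m d 1} (hz : IsAffine z)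
    (b : Fin d) : IsAffine fun w => Bmat σ t p y1 (z w) b :=
  .pi fun _ => .pi fun c => .add (.const _) <| .sum _ fun pq =>
    .const_mul _ <| (((isAffine_h1 p y1 hz).apply pq.1).apply pq.2).apply fun _ => c

lemma isAffine_Amat (μ : ℝ → Arg n m d → (Fin n → ℝ)) (p : Arg n m d) (y1 : Tens n m 1)
    {z : V → TensZ n m d 1} (hz : IsAffine z) : IsAffine fun w => Amat μ σ t p y1 (z w) :=
  .pi fun _ => .pi fun c => .add (.const _) <| .sum _ fun pq =>
    .const_mul _ <| (((isAffine_h1 p y1 hz).apply pq.1).apply pq.2).apply fun _ => c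

lemma isAffine_mulRight_left {k : ℕ} {y : V → Tens n m (k + 1)} (hy : IsAffine y)
    (A : Fin n → Fin n → ℝ) : IsAffine fun w => mulRight (y w) A :=
  .pi fun a => .pi fun _ => .sum _ fun _ => .mul_const ((hy.apply a).apply _) _

lemma isAffine_mulRight_right {k : ℕ} (y : Tens n m (k + 1)) {A : V → Fin n → Fin n → ℝ}
    (hA : IsAffine A) : IsAffine fun w => mulRight y (A w) :=
  .pi fun _ => .pi fun _ => .sum _ fun j => .const_mul _ ((hA.apply j).apply _)

lemma isAffine_hGen (p : Arg n m d) (y1 : Tens n m 1) {z : V → TensZ n m d 1} (hz : IsAffine z)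
    {k : ℕ} (yk : Tens n m (k + 1)) {zk : V → TensZ n m d (k + 1)} (hzk : IsAffine zk) :
    IsAffine fun w => hGen σ t p y1 (z w) yk (zk w) := by
  cases k with
  | zero => exact isAffine_h1 p yk hzk
  | succ k =>
    exact .pi fun a => .pi fun b => .pi fun c => .add (((hzk.apply a).apply b).apply c)
      (((isAffine_mulRight_right yk (isAffine_Bmat p y1 hz b)).apply a).apply c)

lemma isAffine_appZ_Dzp {i : ℕ} (D : EE n m d i →L[ℝ] Tens n m i) (j : Fin (i + 1))
    {z : V → TensZ n m d (j + 1)} (hz : IsAffine z) : IsAffine fun w => appZ (Dzp D j) (z w) :=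
  .pi fun a => .pi fun c =>
    ((hz.linearMap_comp (D ∘L zIncl j ∘L trailingSlice (c (Fin.last i))).toLinearMap).apply
      a).apply (Fin.init c)

variable {i : ℕ} {x : Fin n → ℝ} {Y : (j : Fin (i + 2)) → Tens n m j}
  {Z : V → (j : Fin (i + 2)) → TensZ n m d j} {z₀ : TensZ n m d 0}

-- `h⁽ʲ⁾` and the `μ`-factor are affine in `Z`; the product of `z⁽ⁱ⁺¹⁾` with the `σ`-factor would
-- be quadratic, hence the requirement that the latter be constant.
lemma isAffine_phiStep (μ : ℝ → Arg n m d → (Fin n → ℝ)) (D : EE n m d i →L[ℝ] Tens n m i)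
    (hZ : IsAffine Z) (hZ₀ : ∀ w, Z w ⟨0, by omega⟩ = z₀) {B : Fin d → Fin n → Fin n → ℝ}
    (hB : ∀ w b, Bmat σ t (x, Y ⟨0, by omega⟩, z₀) (Y ⟨1, by omega⟩) (Z w ⟨1, by omega⟩) b = B b) :
    IsAffine fun w => phiStep μ σ t D x Y (Z w) := by
  have hZ₁ : IsAffine fun w => Z w ⟨1, by omega⟩ := hZ.apply _
  have hZlast (b : Fin d) : IsAffine fun w a c => Z w (Fin.last (i + 1)) a b c :=
    .pi fun a => ((hZ.apply _).apply a).apply b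
  simp only [phiStep, hZ₀, hB]
  exact (((IsAffine.const _).add <| .sum _ fun j => (IsAffine.const _).add <|
    isAffine_appZ_Dzp D j <| isAffine_hGen _ _ hZ₁ _ (hZ.apply j.succ)).sub <|
    isAffine_mulRight_right _ (isAffine_Amat μ _ _ hZ₁)).sub <|
    .sum _ fun b => isAffine_mulRight_left (hZlast b) _

end Affine

section Differentiable

variable {V : Type*} [NormedAddCommGroup V] [NormedSpace ℝ V]

lemma differentiable_mulRight {k : ℕ} {y : V → Tens n m (k + 1)} {A : V → Fin n → Fin n → ℝ}
    (hy : Differentiable ℝ y) (hA : Differentiable ℝ A) :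
    Differentiable ℝ fun w => mulRight (y w) (A w) := by
  unfold mulRight
  fun_prop

lemma differentiable_appZ_Dzp {i : ℕ} {D : V → EE n m d i →L[ℝ] Tens n m i}
    (hD : Differentiable ℝ D) (j : Fin (i + 1)) {z : V → TensZ n m d (j + 1)}
    (hz : Differentiable ℝ z) : Differentiable ℝ fun w => appZ (Dzp (D w) j) (z w) := by
  refine differentiable_pi.2 fun a => differentiable_pi.2 fun c => ?_
  simp only [appZ_Dzp_apply]
  fun_prop

lemma differentiable_phiStep [FiniteDimensional ℝ V] {i : ℕ}
    (μ : ℝ → Arg n m d → (Fin n → ℝ)) (σ : ℝ → Arg n m d → Sig n d) (t : ℝ)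
    {D : V → EE n m d i →L[ℝ] Tens n m i} (hD : Differentiable ℝ D)
    (x : Fin n → ℝ) (Y : (j : Fin (i + 2)) → Tens n m j)
    {Z : V → (j : Fin (i + 2)) → TensZ n m d j} (hZ : IsAffine Z) {z₀ : TensZ n m d 0}
    (hZ₀ : ∀ w, Z w ⟨0, by omega⟩ = z₀) :
    Differentiable ℝ fun w => phiStep μ σ t (D w) x Y (Z w) := by
  have hZ₁ : IsAffine fun w => Z w ⟨1, by omega⟩ := hZ.apply _
  have hX : Differentiable ℝ fun w => appX (Dx (D w)) := by
    unfold appX Dx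
    fun_prop
  have hY (j : Fin (i + 1)) : Differentiable ℝ fun w => appY (Dyp (D w) j) (Y j.succ) := by
    unfold appY Dyp
    fun_prop
  have hh (j : Fin (i + 1)) := (isAffine_hGen (σ := σ) (t := t)
    (x, Y ⟨0, by omega⟩, z₀) (Y ⟨1, by omega⟩) hZ₁ (Y j.succ) (hZ.apply j.succ)).differentiable
  have hA := (isAffine_Amat (σ := σ) (t := t) μ (x, Y ⟨0, by omega⟩, z₀)
    (Y ⟨1, by omega⟩) hZ₁).differentiable
  have hB (b : Fin d) := (isAffine_Bmat (σ := σ) (t := t) (x, Y ⟨0, by omega⟩, z₀)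
    (Y ⟨1, by omega⟩) hZ₁ b).differentiable
  have hZlast (b : Fin d) : Differentiable ℝ fun w a c => Z w (Fin.last (i + 1)) a b c := by
    have := (hZ.apply (Fin.last (i + 1))).differentiable
    fun_prop
  simp only [phiStep, hZ₀]
  exact ((hX.add <| .fun_sum fun j _ => (hY j).add <| differentiable_appZ_Dzp hD j (hh j)).sub <|
    differentiable_mulRight (differentiable_const _) hA).sub <|
    .fun_sum fun b _ => differentiable_mulRight (hZlast b) (hB b)

end Differentiable

section StateSpace

variable {i : ℕ}

/-- The truncation `θ_{i+1} ↦ θ_i` of spatial states. -/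
def trunc (p : EE n m d (i + 1)) : EE n m d i :=
  (p.1, fun j => p.2.1 j.castSucc, fun j => p.2.2 j.castSucc)

/-- The spatial part of `Θ_{i+1}`; the constraint `‖y⁽¹⁾‖_op < L_{σ,z}⁻¹` is written without the
inverse, so that it is void for `Lz = 0`. -/
def thetaSet (n m d : ℕ) (Lz : ℝ) (i : ℕ) : Set (EE n m d (i + 1)) :=
  {p | Lz * opN (p.2.1 ⟨1, by omega⟩) < 1}

lemma continuous_opN : Continuous (opN : Tens n m 1 → ℝ) := by
  let L : Tens n m 1 →ₗ[ℝ] EuclideanSpace ℝ (Fin n) →L[ℝ] EuclideanSpace ℝ (Fin m) :=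
    { toFun := fun v => (Matrix.toEuclideanLin (mat1 v)).toContinuousLinearMap
      map_add' := fun v w => by
        rw [show mat1 (v + w) = mat1 v + mat1 w from rfl, map_add, map_add]
      map_smul' := fun c v => by
        rw [show mat1 (c • v) = c • mat1 v from rfl, map_smul, map_smul, RingHom.id_apply] }
  exact L.continuous_of_finiteDimensional.norm

lemma isOpen_thetaSet (Lz : ℝ) (i : ℕ) : IsOpen (thetaSet n m d Lz i) :=
  isOpen_lt (continuous_const.mul (continuous_opN.comp
    ((continuous_apply _).comp (continuous_fst.comp continuous_snd)))) continuous_const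

@[simp] lemma zIncl_fst (j : Fin (i + 1)) (w : TensZ n m d j) : (zIncl j w).1 = 0 := rfl

@[simp] lemma zIncl_snd_fst (j : Fin (i + 1)) (w : TensZ n m d j) : (zIncl j w).2.1 = 0 := rfl

@[simp] lemma zIncl_snd_snd (j : Fin (i + 1)) (w : TensZ n m d j) :
    (zIncl j w).2.2 = Pi.single j w := rfl

lemma add_zIncl_sub (x : Fin n → ℝ) (Y : (l : Fin (i + 1)) → Tens n m l)
    (Z : (l : Fin (i + 1)) → TensZ n m d l) (j : Fin (i + 1)) (w : TensZ n m d j) :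
    (x, Y, Z) + zIncl j (w - Z j) = (x, Y, Function.update Z j w) := by
  refine Prod.ext (add_zero _) (Prod.ext (add_zero _) ?_)
  rw [Pi.update_eq_sub_add_single, sub_add_eq_add_sub, add_sub_assoc, ← Pi.single_sub]
  rfl

@[simp] lemma add_zIncl_mem_thetaSet {Lz : ℝ} {p : EE n m d (i + 1)} (j : Fin (i + 2))
    (w : TensZ n m d j) : p + zIncl j w ∈ thetaSet n m d Lz i ↔ p ∈ thetaSet n m d Lz i := by
  simp [thetaSet]

/-- The state of `Θ_{i+1}` whose `θ_{(i+1)−} = (θ_i, y⁽ⁱ⁺¹⁾)` is given and whose `z⁽ⁱ⁺¹⁾` is `0`. -/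
def ofThetaMinus (x : Fin n → ℝ) (Y : (j : Fin (i + 1)) → Tens n m j)
    (Z : (j : Fin (i + 1)) → TensZ n m d j) (y : Tens n m (i + 1)) : EE n m d (i + 1) :=
  (x, Fin.snoc (α := fun j : Fin (i + 2) => Tens n m j) Y y,
    Fin.snoc (α := fun j : Fin (i + 2) => TensZ n m d j) Z 0)

lemma ofThetaMinus_add_zIncl_last (x : Fin n → ℝ) (Y : (j : Fin (i + 2)) → Tens n m j)
    (Z : (j : Fin (i + 2)) → TensZ n m d j) :
    ofThetaMinus x (fun j => Y j.castSucc) (fun j => Z j.castSucc) (Y (Fin.last (i + 1))) +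
      zIncl (Fin.last (i + 1)) (Z (Fin.last (i + 1))) = (x, Y, Z) := by
  have h := add_zIncl_sub x Y (Fin.snoc (α := fun j : Fin (i + 2) => TensZ n m d j)
    (fun j => Z j.castSucc) 0) (Fin.last (i + 1)) (Z (Fin.last (i + 1)))
  rw [Fin.snoc_last, sub_zero, Fin.update_snoc_last] at h
  rw [ofThetaMinus]
  convert h using 4
  · exact Fin.snoc_init_self Y
  · exact (Fin.snoc_init_self Z).symm

lemma ofThetaMinus_add_zIncl_add_zIncl (x : Fin n → ℝ) (Y : (j : Fin (i + 2)) → Tens n m j)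
    (Z : (j : Fin (i + 2)) → TensZ n m d j) (j : Fin (i + 2)) (w : TensZ n m d j) :
    ofThetaMinus x (fun j => Y j.castSucc) (fun j => Z j.castSucc) (Y (Fin.last (i + 1))) +
      zIncl j (w - Z j) + zIncl (Fin.last (i + 1)) (Z (Fin.last (i + 1))) =
        (x, Y, Function.update Z j w) := by
  rw [add_right_comm, ofThetaMinus_add_zIncl_last, add_zIncl_sub]

lemma trunc_add_zIncl_last (p : EE n m d (i + 1)) (w : TensZ n m d (Fin.last (i + 1))) :
    trunc (p + zIncl (Fin.last (i + 1)) w) = trunc p := by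
  refine Prod.ext (add_zero _) (Prod.ext (add_zero _) (funext fun j => ?_))
  simp [trunc]

lemma trunc_add_zIncl_castSucc (p : EE n m d (i + 1)) (j : Fin (i + 1)) (w : TensZ n m d j) :
    trunc (p + zIncl j.castSucc w) = trunc p + zIncl j w := by
  refine Prod.ext (by simp [trunc])
    (Prod.ext (funext fun l => by simp [trunc]) (funext fun l => ?_))
  rcases eq_or_ne l j with rfl | hl
  · simp [trunc]
  · simp [trunc, Pi.single_eq_of_ne hl,
      Pi.single_eq_of_ne ((Fin.castSucc_injective _).ne hl)]

lemma isAffine_add_zIncl_snd_snd (p : EE n m d i) (j : Fin (i + 1)) :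
    IsAffine fun w : TensZ n m d j => (p + zIncl j w).2.2 :=
  .add (.const _) ⟨(LinearMap.single ℝ (fun j : Fin (i + 1) => TensZ n m d j) j).toAffineMap, rfl⟩

lemma add_zIncl_apply_of_ne (p : EE n m d i) {j l : Fin (i + 1)} (hl : (l : ℕ) ≠ j)
    (w : TensZ n m d j) : (p + zIncl j w).2.2 l = p.2.2 l := by
  rw [Prod.snd_add, Prod.snd_add, zIncl_snd_snd, Pi.add_apply,
    Pi.single_eq_of_ne (Fin.ne_of_val_ne hl), add_zero]

/-- The factor `σ⁽ᵇ⁾_x(θ) + σ⁽ᵇ⁾_y(θ)y⁽¹⁾ + σ⁽ᵇ⁾_z(θ)h⁽¹⁾(θ₁)` as a function of a state of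
`Θ_{i+1}`. -/
noncomputable def sigmaFactor (σ : ℝ → Arg n m d → Sig n d) (t : ℝ) (p : EE n m d (i + 1))
    (b : Fin d) : Fin n → Fin n → ℝ :=
  Bmat σ t (p.1, p.2.1 ⟨0, by omega⟩, p.2.2 ⟨0, by omega⟩)
    (p.2.1 ⟨1, by omega⟩) (p.2.2 ⟨1, by omega⟩) b

lemma sigmaFactor_add_zIncl {σ : ℝ → Arg n m d → Sig n d} {t : ℝ} (p : EE n m d (i + 1))
    {j : Fin (i + 2)} (hj : 1 ≤ (j : ℕ)) (hσ : 2 ≤ (j : ℕ) ∨ ∀ q ζ, sz σ t q ζ = 0)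
    (w : TensZ n m d j) (b : Fin d) :
    sigmaFactor σ t (p + zIncl j w) b = sigmaFactor σ t p b := by
  simp only [sigmaFactor]
  rw [add_zIncl_apply_of_ne p (by simpa using Nat.ne_of_lt hj), Prod.fst_add, zIncl_fst,
    Prod.snd_add, Prod.fst_add, zIncl_snd_fst, add_zero, add_zero]
  rcases hσ with hj₂ | hsz
  · rw [← Prod.snd_add, add_zIncl_apply_of_ne p (by simpa using Nat.ne_of_lt hj₂)]
  · ext a c
    simp only [Bmat, hsz, Pi.zero_apply, zero_mul]

lemma phiStep_add_single_last (μ : ℝ → Arg n m d → (Fin n → ℝ))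
    (σ : ℝ → Arg n m d → Sig n d) (t : ℝ) (D : EE n m d (i + 1) →L[ℝ] Tens n m (i + 1))
    (x : Fin n → ℝ) (Y : (j : Fin (i + 3)) → Tens n m j) (Z : (j : Fin (i + 3)) → TensZ n m d j)
    (z : TensZ n m d (Fin.last (i + 2))) :
    phiStep μ σ t D x Y (Z + Pi.single (Fin.last (i + 2)) z) =
      phiStep μ σ t D x Y Z + (appZ (Dzp D (Fin.last (i + 1))) z -
        ∑ b, mulRight (fun a c => z a b c) (sigmaFactor σ t (x, Y, Z) b)) := by
  set Z' := Z + Pi.single (Fin.last (i + 2)) z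
  have hlt (l : Fin (i + 3)) (hl : (l : ℕ) < i + 2) : Z' l = Z l := by
    simp [Z', Pi.single_eq_of_ne (Fin.ne_of_lt (b := Fin.last (i + 2)) hl)]
  have hlast : Z' (Fin.last (i + 2)) = Z (Fin.last (i + 2)) + z := by simp [Z']
  have hz (j : Fin (i + 1)) : Z' j.castSucc.succ = Z j.castSucc.succ :=
    hlt _ (Nat.succ_lt_succ j.is_lt)
  have hh (q : Arg n m d) (y1 : Tens n m 1) (z1 : TensZ n m d 1) :
      appZ (Dzp D (Fin.last (i + 1))) (hGen σ t q y1 z1 (Y (Fin.last (i + 1)).succ)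
          (Z' (Fin.last (i + 1)).succ)) =
        appZ (Dzp D (Fin.last (i + 1))) (hGen σ t q y1 z1 (Y (Fin.last (i + 1)).succ)
          (Z (Fin.last (i + 1)).succ)) + appZ (Dzp D (Fin.last (i + 1))) z := by
    rw [← appZ_Dzp_add]
    exact congrArg _ ((congrArg _ hlast).trans (hGen_succ_add ..))
  have hmul (b : Fin d) (B : Fin n → Fin n → ℝ) :
      mulRight (fun a c => Z' (Fin.last (i + 2)) a b c) B =
        mulRight (fun a c => Z (Fin.last (i + 2)) a b c) B + mulRight (fun a c => z a b c) B := by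
    rw [hlast]
    exact mulRight_add ..
  simp only [phiStep, sigmaFactor, hlt ⟨0, by omega⟩ (by simp), hlt ⟨1, by omega⟩ (by simp), hmul]
  rw [Fin.sum_univ_castSucc (n := i + 1), Fin.sum_univ_castSucc (n := i + 1)]
  simp only [hz, hh, Finset.sum_add_distrib]
  abel

/-- The right-hand side `phiStep` of the recursion at a bundled state. -/
noncomputable def phiStepAt (μ : ℝ → Arg n m d → (Fin n → ℝ)) (σ : ℝ → Arg n m d → Sig n d)
    (t : ℝ) (D : EE n m d i →L[ℝ] Tens n m i) (p : EE n m d (i + 1)) : Tens n m (i + 1) :=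
  phiStep μ σ t D p.1 p.2.1 p.2.2

lemma isAffine_phiStepAt_add_zIncl (μ : ℝ → Arg n m d → (Fin n → ℝ))
    {σ : ℝ → Arg n m d → Sig n d} {t : ℝ} (D : EE n m d i →L[ℝ] Tens n m i)
    (p : EE n m d (i + 1)) {j : Fin (i + 2)} (hj : 1 ≤ (j : ℕ))
    (hσ : 2 ≤ (j : ℕ) ∨ ∀ q ζ, sz σ t q ζ = 0) :
    IsAffine fun w : TensZ n m d j => phiStepAt μ σ t D (p + zIncl j w) := by
  simp only [phiStepAt, Prod.fst_add, Prod.snd_add, zIncl_fst, zIncl_snd_fst, add_zero]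
  refine isAffine_phiStep μ D (isAffine_add_zIncl_snd_snd p j)
    (fun w => add_zIncl_apply_of_ne p (by simpa using Nat.ne_of_lt hj) w)
    (B := sigmaFactor σ t p) fun w b => ?_
  have := sigmaFactor_add_zIncl p hj hσ w b
  rwa [sigmaFactor, add_zIncl_apply_of_ne p (by simpa using Nat.ne_of_lt hj), Prod.fst_add,
    Prod.snd_add, Prod.fst_add, zIncl_fst, zIncl_snd_fst, add_zero, add_zero] at this

lemma differentiable_phiStepAt_add_zIncl (μ : ℝ → Arg n m d → (Fin n → ℝ))
    (σ : ℝ → Arg n m d → Sig n d) (t : ℝ) (p : EE n m d (i + 1)) {j : Fin (i + 2)}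
    (hj : 1 ≤ (j : ℕ)) {D : TensZ n m d j → EE n m d i →L[ℝ] Tens n m i}
    (hD : Differentiable ℝ D) :
    Differentiable ℝ fun w => phiStepAt μ σ t (D w) (p + zIncl j w) := by
  simp only [phiStepAt, Prod.fst_add, Prod.snd_add, zIncl_fst, zIncl_snd_fst, add_zero]
  exact differentiable_phiStep μ σ t hD _ _ (isAffine_add_zIncl_snd_snd p j)
    fun w => add_zIncl_apply_of_ne p (by simpa using Nat.ne_of_lt hj) w

lemma phiStepAt_add_zIncl_last (μ : ℝ → Arg n m d → (Fin n → ℝ))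
    (σ : ℝ → Arg n m d → Sig n d) (t : ℝ) (D : EE n m d (i + 1) →L[ℝ] Tens n m (i + 1))
    (p : EE n m d (i + 2)) (z : TensZ n m d (i + 2)) :
    phiStepAt μ σ t D (p + zIncl (Fin.last (i + 2)) z) =
      phiStepAt μ σ t D p + (appZ (Dzp D (Fin.last (i + 1))) z -
        ∑ b, mulRight (fun a c => z a b c) (sigmaFactor σ t p b)) := by
  simp only [phiStepAt]
  rw [Prod.fst_add, Prod.snd_add, Prod.fst_add, Prod.snd_add, zIncl_fst, zIncl_snd_fst,
    zIncl_snd_snd, add_zero, add_zero]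
  exact phiStep_add_single_last ..

end StateSpace

namespace IsPhiChain

variable {k i : ℕ} {T Lz t : ℝ} {μ : ℝ → Arg n m d → (Fin n → ℝ)}
  {σ : ℝ → Arg n m d → Sig n d} {f : ℝ → Arg n m d → Tens n m 0}
  {φ : (i : ℕ) → PhiFun n m d i}

lemma eq_phiStepAt (h : IsPhiChain n m d k T Lz μ σ f φ) (hi : i + 1 ≤ k)
    (ht : t ∈ Set.Icc 0 T) {p : EE n m d (i + 1)} (hp : p ∈ thetaSet n m d Lz i) :
    φ (i + 1) t p = phiStepAt μ σ t (fderiv ℝ (φ i t) (trunc p)) p := by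
  obtain ⟨D, hD, hφ⟩ := h.step i hi t ht p.1 p.2.1 p.2.2 hp
  rwa [show fderiv ℝ (φ i t) (trunc p) = D from hD.fderiv]

lemma differentiableAt_trunc (h : IsPhiChain n m d k T Lz μ σ f φ) (hi : i + 1 ≤ k)
    (ht : t ∈ Set.Icc 0 T) {p : EE n m d (i + 1)} (hp : p ∈ thetaSet n m d Lz i) :
    DifferentiableAt ℝ (φ i t) (trunc p) :=
  let ⟨_, hD, _⟩ := h.step i hi t ht p.1 p.2.1 p.2.2 hp
  hD.differentiableAt

lemma isAffine_add_zIncl_last (h : IsPhiChain n m d k T Lz μ σ f φ) (hi : i + 1 ≤ k)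
    (ht : t ∈ Set.Icc 0 T) (hσ : 1 ≤ i ∨ ∀ q ζ, sz σ t q ζ = 0) {p : EE n m d (i + 1)}
    (hp : p ∈ thetaSet n m d Lz i) :
    IsAffine fun w => φ (i + 1) t (p + zIncl (Fin.last (i + 1)) w) := by
  simp only [h.eq_phiStepAt hi ht ((add_zIncl_mem_thetaSet _ _).2 hp), trunc_add_zIncl_last]
  exact isAffine_phiStepAt_add_zIncl μ _ p (by simp) (hσ.imp_left fun hi₁ => by simpa using hi₁)

lemma differentiableAt_add_zIncl_last (h : IsPhiChain n m d k T Lz μ σ f φ) (hi : i + 2 ≤ k)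
    (ht : t ∈ Set.Icc 0 T) {p : EE n m d (i + 2)} (hp : p ∈ thetaSet n m d Lz (i + 1))
    (w : TensZ n m d (i + 1)) :
    DifferentiableAt ℝ (φ (i + 1) t) (trunc p + zIncl (Fin.last (i + 1)) w) := by
  rw [← trunc_add_zIncl_castSucc]
  exact h.differentiableAt_trunc hi ht ((add_zIncl_mem_thetaSet _ _).2 hp)

lemma isAffine_fderiv_add_zIncl_last (h : IsPhiChain n m d k T Lz μ σ f φ) (hi : i + 2 ≤ k)
    (ht : t ∈ Set.Icc 0 T) (hσ : 1 ≤ i ∨ ∀ q ζ, sz σ t q ζ = 0) {p : EE n m d (i + 2)}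
    (hp : p ∈ thetaSet n m d Lz (i + 1)) :
    IsAffine fun w : TensZ n m d (i + 1) =>
      fderiv ℝ (φ (i + 1) t) (trunc p + zIncl (Fin.last (i + 1)) w) :=
  .fderiv_translate
    ((isOpen_thetaSet Lz i).eventually_mem (x := trunc p) hp |>.mono fun _ hq =>
      h.isAffine_add_zIncl_last (by omega) ht hσ hq)
    (h.differentiableAt_add_zIncl_last hi ht hp)

lemma fderiv_add_zIncl_last_apply_zIncl (h : IsPhiChain n m d k T Lz μ σ f φ) (hi : i + 2 ≤ k)
    (ht : t ∈ Set.Icc 0 T) (hσ : 1 ≤ i ∨ ∀ q ζ, sz σ t q ζ = 0) {p : EE n m d (i + 2)}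
    (hp : p ∈ thetaSet n m d Lz (i + 1)) (w v : TensZ n m d (i + 1)) :
    fderiv ℝ (φ (i + 1) t) (trunc p + zIncl (Fin.last (i + 1)) w) (zIncl (Fin.last (i + 1)) v) =
      φ (i + 1) t (trunc p + zIncl (Fin.last (i + 1)) v) - φ (i + 1) t (trunc p) := by
  have haff := h.isAffine_add_zIncl_last (p := trunc p) (by omega) ht hσ hp
  have hcomp : HasFDerivAt (fun w => φ (i + 1) t (trunc p + zIncl (Fin.last (i + 1)) w)) _ w :=
    (h.differentiableAt_add_zIncl_last hi ht hp w).hasFDerivAt.comp w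
      ((zIncl (Fin.last (i + 1))).hasFDerivAt.const_add (trunc p))
  have hderiv := haff.fderiv_apply w v
  rwa [hcomp.fderiv, map_zero, add_zero] at hderiv

lemma differentiable_add_zIncl_penultimate (h : IsPhiChain n m d k T Lz μ σ f φ) (hi : i + 2 ≤ k)
    (ht : t ∈ Set.Icc 0 T) (hσ : 1 ≤ i ∨ ∀ q ζ, sz σ t q ζ = 0) {p : EE n m d (i + 2)}
    (hp : p ∈ thetaSet n m d Lz (i + 1)) :
    Differentiable ℝ fun w : TensZ n m d (i + 1) =>
      φ (i + 2) t (p + zIncl (Fin.last (i + 1)).castSucc w) := by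
  have hφ (w : TensZ n m d (i + 1)) :=
    h.eq_phiStepAt hi ht ((add_zIncl_mem_thetaSet (Fin.last (i + 1)).castSucc w).2 hp)
  simp only [hφ, trunc_add_zIncl_castSucc]
  exact differentiable_phiStepAt_add_zIncl μ σ t p (j := (Fin.last (i + 1)).castSucc) (by simp)
    (h.isAffine_fderiv_add_zIncl_last hi ht hσ hp).differentiable

lemma exists_add_zIncl_last_eq_add (h : IsPhiChain n m d k T Lz μ σ f φ) (hi : i + 2 ≤ k)
    (ht : t ∈ Set.Icc 0 T) (hσ : 1 ≤ i ∨ ∀ q ζ, sz σ t q ζ = 0) {p : EE n m d (i + 2)}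
    (hp : p ∈ thetaSet n m d Lz (i + 1)) (z : TensZ n m d (i + 2)) :
    ∃ C, ∀ w : TensZ n m d (i + 1),
      φ (i + 2) t (p + zIncl (Fin.last (i + 1)).castSucc w + zIncl (Fin.last (i + 2)) z) =
        φ (i + 2) t (p + zIncl (Fin.last (i + 1)).castSucc w) + C := by
  set D := fun w => fderiv ℝ (φ (i + 1) t) (trunc p + zIncl (Fin.last (i + 1)) w)
  have hconst (w : TensZ n m d (i + 1)) :
      appZ (Dzp (D w) (Fin.last (i + 1))) z = appZ (Dzp (D 0) (Fin.last (i + 1))) z := by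
    ext a c
    simp only [appZ_Dzp_apply, D]
    simp only [h.fderiv_add_zIncl_last_apply_zIncl hi ht hσ hp]
  refine ⟨appZ (Dzp (D 0) (Fin.last (i + 1))) z -
    ∑ b, mulRight (fun a c => z a b c) (sigmaFactor σ t p b), fun w => ?_⟩
  have hpw := (add_zIncl_mem_thetaSet (Fin.last (i + 1)).castSucc w).2 hp
  rw [h.eq_phiStepAt hi ht ((add_zIncl_mem_thetaSet _ _).2 hpw), trunc_add_zIncl_last,
    phiStepAt_add_zIncl_last, ← h.eq_phiStepAt hi ht hpw, trunc_add_zIncl_castSucc]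
  simp only [sigmaFactor_add_zIncl p (j := (Fin.last (i + 1)).castSucc) (by simp)
    (hσ.imp_left fun hi₁ => by simpa using hi₁)]
  rw [← hconst w]

lemma hasFDerivAt_add_zIncl_penultimate (h : IsPhiChain n m d k T Lz μ σ f φ) (hi : i + 2 ≤ k)
    (ht : t ∈ Set.Icc 0 T) (hσ : 1 ≤ i ∨ ∀ q ζ, sz σ t q ζ = 0) {p : EE n m d (i + 2)}
    (hp : p ∈ thetaSet n m d Lz (i + 1)) (z : TensZ n m d (i + 2)) (w : TensZ n m d (i + 1)) :
    HasFDerivAt (fun w : TensZ n m d (i + 1) =>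
        φ (i + 2) t (p + zIncl (Fin.last (i + 1)).castSucc w + zIncl (Fin.last (i + 2)) z))
      (fderiv ℝ (fun w : TensZ n m d (i + 1) =>
        φ (i + 2) t (p + zIncl (Fin.last (i + 1)).castSucc w)) w) w := by
  obtain ⟨C, hC⟩ := h.exists_add_zIncl_last_eq_add hi ht hσ hp z
  simp only [hC]
  exact (h.differentiable_add_zIncl_penultimate hi ht hσ hp w).hasFDerivAt.add_const C

end IsPhiChain

lemma eq_zero_of_frobS_nonpos {s : Sig n d} (hs : frobS s ≤ 0) : s = 0 := by
  have hsum : ∑ i, ∑ j, s i j ^ 2 ≤ 0 := Real.sqrt_eq_zero'.1 (hs.antisymm (Real.sqrt_nonneg _))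
  have hrow (i : Fin n) : 0 ≤ ∑ j, s i j ^ 2 := Finset.sum_nonneg fun j _ => sq_nonneg _
  ext i j
  have hi := (Fintype.sum_eq_zero_iff_of_nonneg hrow).1 (hsum.antisymm (Fintype.sum_nonneg hrow))
  exact pow_eq_zero_iff two_ne_zero |>.1 <|
    congrFun ((Fintype.sum_eq_zero_iff_of_nonneg fun j => sq_nonneg (s i j)).1 (congrFun hi i)) j

lemma sz_eq_zero {σ : ℝ → Arg n m d → Sig n d} {t : ℝ} {p : Arg n m d}
    (hd : DifferentiableAt ℝ (σ t) p) (hσ : ∀ z, σ t (p.1, p.2.1, z) = σ t p)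
    (ζ : TensZ n m d 0) : sz σ t p ζ = 0 := by
  have hline : (fun s : ℝ => σ t (p + s • (0, 0, ζ))) = fun _ => σ t p :=
    funext fun s => by simpa [Prod.add_def] using hσ (p.2.2 + s • ζ)
  rw [sz, ← hd.lineDeriv_eq_fderiv, lineDeriv, hline, deriv_const]

theorem phi_deriv_zk_minus_one_function_of_theta_k_minus_general
    {n m d : ℕ} {T : ℝ} (K : ℕ)
    (μ : ℝ → Arg n m d → (Fin n → ℝ)) (σ : ℝ → Arg n m d → Sig n d)
    (f : ℝ → Arg n m d → Tens n m 0) (Lz : ℝ)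
    (hdiff : ∀ t ∈ Set.Icc (0 : ℝ) T, Differentiable ℝ (μ t) ∧ Differentiable ℝ (σ t))
    (hLz : ∀ t ∈ Set.Icc (0 : ℝ) T, ∀ (x : Fin n → ℝ) (y : Tens n m 0) (z z' : TensZ n m d 0),
      frobS (σ t (x, y, z) - σ t (x, y, z')) ≤ Lz * frobTZ (z - z'))
    (hcase : 1 ≤ K ∨ Lz = 0)
    (φ : (i : ℕ) → PhiFun n m d i)
    (hchain : IsPhiChain n m d (K + 2) T Lz μ σ f φ) :
    ∃ g : ℝ → (Fin n → ℝ) → ((j : Fin (K + 2)) → Tens n m j) →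
        ((j : Fin (K + 2)) → TensZ n m d j) → Tens n m (K + 2) →
        (TensZ n m d (K + 1) →L[ℝ] Tens n m (K + 2)),
      ∀ t ∈ Set.Icc (0 : ℝ) T, ∀ (x : Fin n → ℝ)
        (Y : (j : Fin (K + 3)) → Tens n m j) (Z : (j : Fin (K + 3)) → TensZ n m d j),
        (x, Y, Z) ∈ thetaSet n m d Lz (K + 1) →
        HasFDerivAt
          (fun w : TensZ n m d (K + 1) =>
            φ (K + 2) t (x, Y, Function.update Z ⟨K + 1, by simp⟩ w))
          (g t x (fun j : Fin (K + 2) => Y j.castSucc)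
            (fun j : Fin (K + 2) => Z j.castSucc) (Y (Fin.last (K + 2))))
          (Z ⟨K + 1, by simp⟩) := by
  refine ⟨fun t x Y' Z' yk => fderiv ℝ (fun w : TensZ n m d (K + 1) =>
    φ (K + 2) t (ofThetaMinus x Y' Z' yk + zIncl (Fin.last (K + 1)).castSucc w)) 0,
    fun t ht x Y Z hY => ?_⟩
  have hσ : 1 ≤ K ∨ ∀ q ζ, sz σ t q ζ = 0 := hcase.imp_right fun hLz₀ q ζ =>
    sz_eq_zero ((hdiff t ht).2 q) (fun z => sub_eq_zero.1 <| eq_zero_of_frobS_nonpos <| by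
      simpa [hLz₀] using hLz t ht q.1 q.2.1 z q.2.2) ζ
  set p := ofThetaMinus x (fun j => Y j.castSucc) (fun j => Z j.castSucc) (Y (Fin.last (K + 2)))
  have hp : p ∈ thetaSet n m d Lz (K + 1) := by
    rw [← add_zIncl_mem_thetaSet (Fin.last (K + 2)) (Z (Fin.last (K + 2))),
      ofThetaMinus_add_zIncl_last]
    exact hY
  have hupdate (w : TensZ n m d (K + 1)) : (x, Y, Function.update Z ⟨K + 1, by simp⟩ w) =
      p + zIncl (Fin.last (K + 1)).castSucc (w - Z ⟨K + 1, by simp⟩) +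
        zIncl (Fin.last (K + 2)) (Z (Fin.last (K + 2))) :=
    (ofThetaMinus_add_zIncl_add_zIncl x Y Z (Fin.last (K + 1)).castSucc w).symm
  simp only [hupdate]
  refine (hasFDerivAt_comp_sub (f := fun w : TensZ n m d (K + 1) => φ (K + 2) t
    (p + zIncl (Fin.last (K + 1)).castSucc w +
      zIncl (Fin.last (K + 2)) (Z (Fin.last (K + 2))))) _).2 ?_
  rw [sub_self]
  exact hchain.hasFDerivAt_add_zIncl_penultimate le_rfl ht hσ hp _ 0

/-- **Lemma 6.3.**  Assume `(μ,σ,f)` satisfies `(k-MLLC)` with `k = K + 2 ≥ 3` (or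
`k = K + 2 ≥ 2` if `L_{σ,z} = 0`).  Then the partial derivative `φ⁽ᵏ⁾_{z⁽ᵏ⁻¹⁾}` can
be expressed as a function of `θ_{k−} = (θ_{k−1}, y⁽ᵏ⁾)` only: there exists a function
`g` on `Θ_{k−1} × ℝ^{m×_k n}`, with values in the linear maps
`ℝ^{(m×d)×_{k−1} n} → ℝ^{m×_k n}`, such that at every `θ_k ∈ Θ_k` the derivative of
`φ⁽ᵏ⁾` with respect to `z⁽ᵏ⁻¹⁾` equals `g(θ_{k−})`; in particular this derivative does
not depend on `z⁽ᵏ⁾`. -/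
theorem phi_deriv_zk_minus_one_function_of_theta_k_minus
    {n m d : ℕ} {T : ℝ} (hT : 0 < T) (K : ℕ)
    (μ : ℝ → Arg n m d → (Fin n → ℝ)) (σ : ℝ → Arg n m d → Sig n d)
    (f : ℝ → Arg n m d → Tens n m 0) (Lz : ℝ)
    (hMLLC : MLLC n m d (K + 2) T μ σ f Lz)
    (hcase : 1 ≤ K ∨ Lz = 0)
    (φ : (i : ℕ) → PhiFun n m d i)
    (hchain : IsPhiChain n m d (K + 2) T Lz μ σ f φ) :
    ∃ g : ℝ → (Fin n → ℝ) → ((j : Fin (K + 2)) → Tens n m j) →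
        ((j : Fin (K + 2)) → TensZ n m d j) → Tens n m (K + 2) →
        (TensZ n m d (K + 1) →L[ℝ] Tens n m (K + 2)),
      ∀ t ∈ Set.Icc (0:ℝ) T, ∀ (x : Fin n → ℝ)
        (Y : (j : Fin (K + 3)) → Tens n m j) (Z : (j : Fin (K + 3)) → TensZ n m d j),
        Lz * opN (Y ⟨1, by omega⟩) < 1 →
        HasFDerivAt
          (fun w : TensZ n m d (K + 1) =>
            φ (K + 2) t (x, Y, Function.update Z ⟨K + 1, by omega⟩ w))
          (g t x (fun j : Fin (K + 2) => Y j.castSucc)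
            (fun j : Fin (K + 2) => Z j.castSucc) (Y (Fin.last (K + 2))))
          (Z ⟨K + 1, by omega⟩) := by
  exact phi_deriv_zk_minus_one_function_of_theta_k_minus_general K μ σ f Lz
    (fun t ht => ⟨(hMLLC.smooth_mu t ht).differentiable (by simp),
      (hMLLC.smooth_sigma t ht).differentiable (by simp)⟩)
    hMLLC.lz_lipschitz hcase φ hchain

end DecouplingFBSDE
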